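/- Let A be a symmetric positive definite n×n real matrix, b ∈ ℝⁿ, and x⁽¹⁾, …, x⁽ᵏ⁾ ∈ ℝⁿ. Set r⁽¹⁾ = b − A x⁽¹⁾, let K_j denote the Krylov subspaces (with K₀ = {0}), and set r⁽ᵏ⁾ = b − A x⁽ᵏ⁾. Assume: (i) span{x⁽ᵏ⁾ − x⁽ᵏ⁻¹⁾, …, x⁽²⁾ − x⁽¹⁾} = K_{k−1}; (ii) r⁽ᵏ⁾ ⊥ K_{k−1}; (iii) r⁽ᵏ⁾ ≠ 0; (iv) x^P = x⁽ᵏ⁾ + λ r⁽ᵏ⁾ for some λ > 0; (v) x⁽ᵏ⁺¹⁾ ∈ x^P + O_k(x^P), where O_k(x^P) = span{x⁽¹⁾ − x^P, …, x⁽ᵏ⁾ − x^P}; and (vi) b − A x⁽ᵏ⁺¹⁾ ⊥ O_k(x^P). Then x⁽ᵏ⁺¹⁾ ∈ x⁽¹⁾ + K_k and b − A x⁽ᵏ⁺¹⁾ ⊥ K_k; moreover, if additionally b − A x⁽ᵏ⁺¹⁾ ≠ 0, then span{x⁽ᵏ⁺¹⁾ − x⁽ᵏ⁾, x⁽ᵏ⁾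 − x⁽ᵏ⁻¹⁾, …, x⁽²⁾ − x⁽¹⁾} = K_k. -/

import Mathlib

/-! Write `V = K_{k-1}`, `r = b - A x⁽ᵏ⁾` and `w = A^{k-1} r⁽¹⁾`, so that `K_k = span {w} ⊔ V`
(`krylov_succ`). Hence any `u ∈ K_k` outside `V` can replace `w`: `span {u} ⊔ V = K_k`
(`span_sup_eq_of_notMem`). This exchange is used twice.

* With `u = r`: by telescoping `x⁽ᵏ⁾ - x⁽¹⁾ ∈ V`, so `r = r⁽¹⁾ - A (x⁽ᵏ⁾ - x⁽¹⁾)` is in `K_k`, and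
  `r ∉ V` because `r` is nonzero and orthogonal to `V`. As `λ ≠ 0`, the space `O_k(x^P)` contains
  `r` and all differences of the iterates, so it contains `K_k`; the reverse inclusion is
  immediate. The first two claims follow.
* With `u = d = x⁽ᵏ⁺¹⁾ - x⁽ᵏ⁾`: if `d` were in `V`, then `d` would be orthogonal to both `r` and
  `r - A d`, so `dᵀ A d = 0` and `d = 0` by positive definiteness. Then `b - A x⁽ᵏ⁺¹⁾ = r` would be
  orthogonal to `K_k ∋ r`, contradicting `r ≠ 0`. -/

open Matrix

/-- The Krylov subspace `K_k = span {r, A r, …, A^{k-1} r}` (so `K_0 = {0}`). -/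
noncomputable def krylov {n : ℕ} (A : Matrix (Fin n) (Fin n) ℝ) (r : Fin n → ℝ) (k : ℕ) :
    Submodule ℝ (Fin n → ℝ) :=
  Submodule.span ℝ (Set.range fun i : Fin k => (A ^ (i : ℕ)).mulVec r)

/-- The O-ACCEL subspace `O_k(p) = span {x⁽¹⁾ - p, …, x⁽ᵏ⁾ - p}`. -/
noncomputable def osub {n : ℕ} (x : ℕ → Fin n → ℝ) (k : ℕ) (p : Fin n → ℝ) :
    Submodule ℝ (Fin n → ℝ) :=
  Submodule.span ℝ {v | ∃ j, 1 ≤ j ∧ j ≤ k ∧ v = x j - p}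

theorem krylov_succ {n : ℕ} (A : Matrix (Fin n) (Fin n) ℝ) (r : Fin n → ℝ) (m : ℕ) :
    krylov A r (m + 1) = Submodule.span ℝ {(A ^ m).mulVec r} ⊔ krylov A r m := by
  unfold krylov
  rw [← Submodule.span_union]
  congr 1
  ext v
  simp only [Set.mem_range, Set.mem_union, Set.mem_singleton_iff, Fin.exists_fin_succ',
    Fin.val_castSucc, Fin.val_last]
  rw [or_comm, eq_comm (a := v)]

theorem pow_mulVec_mem_krylov {n : ℕ} (A : Matrix (Fin n) (Fin n) ℝ) (r : Fin n → ℝ)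
    {i m : ℕ} (h : i < m) : (A ^ i).mulVec r ∈ krylov A r m :=
  Submodule.subset_span ⟨⟨i, h⟩, rfl⟩

theorem mulVec_mem_krylov {n : ℕ} (A : Matrix (Fin n) (Fin n) ℝ) (r : Fin n → ℝ) (m : ℕ)
    {v : Fin n → ℝ} (hv : v ∈ krylov A r m) : A.mulVec v ∈ krylov A r (m + 1) := by
  have hle : krylov A r m ≤ (krylov A r (m + 1)).comap A.mulVecLin := by
    refine Submodule.span_le.2 ?_
    rintro _ ⟨i, rfl⟩
    change A.mulVec ((A ^ (i : ℕ)).mulVec r) ∈ krylov A r (m + 1)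
    rw [mulVec_mulVec, ← pow_succ']
    exact pow_mulVec_mem_krylov A r (Nat.succ_lt_succ i.2)
  exact hle hv

/-- Exchange: a vector of `span {w} ⊔ V` outside `V` may replace `w`. -/
theorem span_sup_eq_of_notMem {E : Type*} [AddCommGroup E] [Module ℝ E] {V : Submodule ℝ E}
    {u w : E} (hu : u ∈ Submodule.span ℝ {w} ⊔ V) (hV : u ∉ V) :
    Submodule.span ℝ {u} ⊔ V = Submodule.span ℝ {w} ⊔ V := by
  apply le_antisymm
  · exact sup_le ((Submodule.span_singleton_le_iff_mem _ _).2 hu) le_sup_right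
  · refine sup_le ((Submodule.span_singleton_le_iff_mem _ _).2 ?_) le_sup_right
    obtain ⟨y, hy, v, hv, rfl⟩ := Submodule.mem_sup.1 hu
    obtain ⟨c, rfl⟩ := Submodule.mem_span_singleton.1 hy
    have hc : c ≠ 0 := by
      rintro rfl
      exact hV (by simpa using hv)
    have hw : w = c⁻¹ • (c • w + v) - c⁻¹ • v := by
      rw [smul_add, add_sub_cancel_right, inv_smul_smul₀ hc]
    refine (congrArg (· ∈ Submodule.span ℝ {c • w + v} ⊔ V) hw).mpr ?_
    exact Submodule.sub_mem _
      (Submodule.smul_mem _ _ (Submodule.mem_sup_left (Submodule.mem_span_singleton_self _)))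
      (Submodule.smul_mem _ _ (Submodule.mem_sup_right hv))

/-- Telescoping: if the first `k - 1` consecutive differences lie in `V`, so does `x k - x j`. -/
theorem sub_mem_of_succ_sub_mem {E : Type*} [AddCommGroup E] [Module ℝ E] {V : Submodule ℝ E}
    {x : ℕ → E} {k : ℕ} (h : ∀ j, 1 ≤ j → j + 1 ≤ k → x (j + 1) - x j ∈ V)
    {j : ℕ} (hj : 1 ≤ j) (hjk : j ≤ k) : x k - x j ∈ V := by
  induction k, hjk using Nat.le_induction with
  | base => simp
  | succ m hm ih =>
    rw [← sub_add_sub_cancel (x (m + 1)) (x m) (x j)]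
    exact V.add_mem (h m (hj.trans hm) le_rfl) (ih fun i hi him => h i hi (by omega))

/-- The inductive step in the proof that O-ACCEL iterates are FOM iterates:
given the induction hypotheses at stage `k`, the new iterate `x⁽ᵏ⁺¹⁾` lies in
`x⁽¹⁾ + K_k`, its residual is orthogonal to `K_k`, and (if the new residual is
nonzero) the consecutive differences span `K_k`. -/
theorem stmt2 {n : ℕ} (A : Matrix (Fin n) (Fin n) ℝ) (hA : A.PosDef)
    (b : Fin n → ℝ) (k : ℕ) (hk : 1 ≤ k) (x : ℕ → Fin n → ℝ)
    (xP : Fin n → ℝ) (lam : ℝ) (hlam : 0 < lam)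
    (hspan : Submodule.span ℝ {v | ∃ j, 1 ≤ j ∧ j + 1 ≤ k ∧ v = x (j + 1) - x j}
      = krylov A (b - A.mulVec (x 1)) (k - 1))
    (horth : ∀ v ∈ krylov A (b - A.mulVec (x 1)) (k - 1), (b - A.mulVec (x k)) ⬝ᵥ v = 0)
    (hrk : b - A.mulVec (x k) ≠ 0)
    (hxP : xP = x k + lam • (b - A.mulVec (x k)))
    (hstep : x (k + 1) - xP ∈ osub x k xP)
    (horth' : ∀ v ∈ osub x k xP, (b - A.mulVec (x (k + 1))) ⬝ᵥ v = 0) :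
    x (k + 1) - x 1 ∈ krylov A (b - A.mulVec (x 1)) k ∧
    (∀ v ∈ krylov A (b - A.mulVec (x 1)) k, (b - A.mulVec (x (k + 1))) ⬝ᵥ v = 0) ∧
    (b - A.mulVec (x (k + 1)) ≠ 0 →
      Submodule.span ℝ ({x (k + 1) - x k} ∪ {v | ∃ j, 1 ≤ j ∧ j + 1 ≤ k ∧ v = x (j + 1) - x j})
        = krylov A (b - A.mulVec (x 1)) k) := by
  obtain ⟨m, rfl⟩ : ∃ m, k = m + 1 := ⟨k - 1, by omega⟩
  simp only [Nat.add_sub_cancel] at hspan horth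
  set r₁ := b - A.mulVec (x 1) with hr₁
  set r := b - A.mulVec (x (m + 1)) with hr
  have hKle : krylov A r₁ m ≤ krylov A r₁ (m + 1) := by
    rw [krylov_succ]
    exact le_sup_right
  have hdiff : ∀ j, 1 ≤ j → j ≤ m + 1 → x (m + 1) - x j ∈ krylov A r₁ m := by
    intro j hj hjk
    refine sub_mem_of_succ_sub_mem (fun i hi hik => ?_) hj hjk
    rw [← hspan]
    exact Submodule.subset_span ⟨i, hi, hik, rfl⟩
  have hrK : r ∈ krylov A r₁ (m + 1) := by
    have h : r = r₁ - A.mulVec (x (m + 1) - x 1) := by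
      rw [hr, hr₁, mulVec_sub]
      abel
    rw [h]
    refine Submodule.sub_mem _ ?_ (mulVec_mem_krylov A r₁ m (hdiff 1 le_rfl hk))
    simpa using pow_mulVec_mem_krylov A r₁ (Nat.succ_pos m)
  have hrV : r ∉ krylov A r₁ m := fun h => hrk (dotProduct_self_eq_zero.1 (horth r h))
  have hsup : Submodule.span ℝ {r} ⊔ krylov A r₁ m = krylov A r₁ (m + 1) := by
    rw [krylov_succ] at hrK ⊢
    exact span_sup_eq_of_notMem hrK hrV
  have hOK : osub x (m + 1) xP = krylov A r₁ (m + 1) := by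
    apply le_antisymm
    · refine Submodule.span_le.2 ?_
      rintro _ ⟨j, hj, hjk, rfl⟩
      have h : x j - xP = -(x (m + 1) - x j) - lam • r := by
        rw [hxP]
        abel
      rw [h]
      exact Submodule.sub_mem _ (Submodule.neg_mem _ (hKle (hdiff j hj hjk)))
        (Submodule.smul_mem _ _ hrK)
    · have hO : ∀ j, 1 ≤ j → j ≤ m + 1 → x j - xP ∈ osub x (m + 1) xP :=
        fun j hj hjk => Submodule.subset_span ⟨j, hj, hjk, rfl⟩
      rw [← hsup, ← hspan]
      refine sup_le ((Submodule.span_singleton_le_iff_mem _ _).2 ?_) (Submodule.span_le.2 ?_)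
      · have h : r = (-lam⁻¹) • (x (m + 1) - xP) := by
          rw [hxP, sub_add_cancel_left, smul_neg, neg_smul, neg_neg, inv_smul_smul₀ hlam.ne']
        rw [h]
        exact Submodule.smul_mem _ _ (hO _ hk le_rfl)
      · rintro _ ⟨j, hj, hjk, rfl⟩
        rw [← sub_sub_sub_cancel_right (x (j + 1)) (x j) xP]
        exact Submodule.sub_mem _ (hO _ (by omega) hjk) (hO _ hj (by omega))
  rw [hOK] at hstep horth'
  have hdK : x (m + 1 + 1) - x (m + 1) ∈ krylov A r₁ (m + 1) := by
    have h : x (m + 1 + 1) - x (m + 1) = (x (m + 1 + 1) - xP) + lam • r := by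
      rw [hxP]
      abel
    rw [h]
    exact Submodule.add_mem _ hstep (Submodule.smul_mem _ _ hrK)
  refine ⟨?_, horth', fun _ => ?_⟩
  · rw [← sub_add_sub_cancel _ (x (m + 1)) (x 1)]
    exact Submodule.add_mem _ hdK (hKle (hdiff 1 le_rfl hk))
  · rw [Submodule.span_union, hspan]
    have hdV : x (m + 1 + 1) - x (m + 1) ∉ krylov A r₁ m := by
      intro hd
      set d := x (m + 1 + 1) - x (m + 1) with hd_def
      have hres : b - A.mulVec (x (m + 1 + 1)) = r - A.mulVec d := by
        rw [hd_def, hr, mulVec_sub]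
        abel
      have h0 : d ⬝ᵥ A.mulVec d = 0 := by
        have h1 := horth' d hdK
        rw [hres, sub_dotProduct, horth d hd, zero_sub, neg_eq_zero] at h1
        rwa [dotProduct_comm]
      have hd0 : d = 0 := by
        by_contra hne
        have hpos := hA.dotProduct_mulVec_pos hne
        rw [star_trivial] at hpos
        exact hpos.ne' h0
      have h2 := horth' r hrK
      rw [hres, hd0, mulVec_zero, sub_zero] at h2
      exact hrk (dotProduct_self_eq_zero.1 h2)
    rw [krylov_succ] at hdK ⊢
    exact span_sup_eq_of_notMem hdK hdV
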